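/- arXiv:1405.6634 — 2 statements merged into one kernel-verified Lean document; each statement's English description precedes it below -/
import Mathlib

section
/- Let N ≥ 2 be an integer, β ≥ 1, and let U ∈ C²(ℝ) be such that |U(x)| + |U′(x)| + |U″(x)| ≤ C(1 + |x|)^k for some constants C, k. Let μ be the probability measure on ℝ^N with density proportional to ∏_{1 ≤ i < j ≤ N} |λ_i − λ_j|^β · exp(−βN ∑_{i=1}^N (U(λ_i)/2 + λ_i²/4)) with respect to Lebesgue measure. Then E^μ[ −(1/2) ∑_{i=1}^N U″(λ_i) + (βN/4) ∑_{i=1}^N U′(λ_i) ( U′(λ_i) + λ_i − (2/N) ∑_{j ≠ i} 1/(λ_i − λ_j) ) ] = 0. -/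
open MeasureTheory
open Filter Topology

/-!
The loop equation says that the divergence, with respect to the log-gas density, of the vector field
`λ ↦ (U'(λᵢ))ᵢ` has mean zero. For a compactly supported field this is integration by parts: every
line either lies in a given collision hyperplane `λᵢ = λⱼ` or meets it at most once, and the
derivative of `|x|^β` is locally integrable.

Truncating `U'` by a cutoff `χ = χ(ε ∑ λᵢ²)` produces an error `∇χ · U'` that nothing controls. If
`W' = c (U' + x)` is the derivative of the confining potential `W`, the field `c χ U' + ∇χ` avoids
it: the term `-∇χ · W'` coming from `∇χ` turns `c ∇χ · U'` into `-c ∇χ · λ`. The rest of the error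
is bounded uniformly in `ε ≤ 1`, because `∑ᵢ λᵢ ∑_{j ≠ i} (λᵢ - λⱼ)⁻¹` is the number of pairs, by
Euler's identity for the Vandermonde determinant. Dominated convergence then lets `ε → 0`.
-/

section LineDerivative

variable {E F : Type*} [NormedAddCommGroup E] [NormedSpace ℝ E] [NormedAddCommGroup F]

theorem intervalIntegral_lineDeriv_eq_sub [NormedSpace ℝ F] [CompleteSpace F] {f f' : E → F} {v : E}
    (hf : Continuous f) {s : Set E} (hs : ∀ x, {t : ℝ | x + t • v ∈ s}.Countable)
    (hderiv : ∀ x ∉ s, HasLineDerivAt ℝ f (f' x) x v) {x : E}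
    (hint : IntervalIntegrable (fun t : ℝ => f' (x + t • v)) volume 0 1) :
    ∫ t in (0 : ℝ)..1, f' (x + t • v) = f (x + v) - f x := by
  have hline : ∀ t : ℝ, x + t • v ∉ s →
      HasDerivAt (fun t : ℝ => f (x + t • v)) (f' (x + t • v)) t := fun t ht => by
    have h := hderiv _ ht
    rw [HasLineDerivAt, ← sub_self t] at h
    simpa [add_assoc, ← add_smul] using h.comp_sub_const
  simpa using integral_eq_of_hasDerivAt_off_countable (fun t : ℝ => f (x + t • v)) _ (hs x)
    (by fun_prop) (fun t ht => hline t ht.2) hint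

variable [MeasurableSpace E] [BorelSpace E] [SecondCountableTopology E]
  {μ : Measure E} [SFinite μ] [μ.IsAddRightInvariant]

theorem integrable_comp_add_smul_prod {f : E → F} (hf : Integrable f μ) (v : E) (ν : Measure ℝ)
    [IsFiniteMeasure ν] : Integrable (fun p : ℝ × E => f (p.2 + p.1 • v)) (ν.prod μ) := by
  have shear : MeasurePreserving (fun p : ℝ × E => (p.1, p.2 + p.1 • v)) (ν.prod μ) (ν.prod μ) :=
    (MeasurePreserving.id ν).skew_product (by fun_prop)
      (ae_of_all _ fun t => map_add_right_eq_self μ (t • v))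
  exact shear.integrable_comp_of_integrable (hf.comp_snd ν)

theorem integral_eq_zero_of_hasLineDerivAt_off_countable [NormedSpace ℝ F] [CompleteSpace F]
    {f f' : E → F} {v : E} (hf : Continuous f) (hf_int : Integrable f μ)
    (hf'_int : Integrable f' μ) {s : Set E} (hs : ∀ x, {t : ℝ | x + t • v ∈ s}.Countable)
    (hderiv : ∀ x ∉ s, HasLineDerivAt ℝ f (f' x) x v) :
    ∫ x, f' x ∂μ = 0 := by
  have : IsFiniteMeasure (volume.restrict (Set.uIoc (0 : ℝ) 1)) := ⟨by simp⟩
  have hprod := integrable_comp_add_smul_prod hf'_int v (volume.restrict (Set.uIoc (0 : ℝ) 1))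
  have hslice : ∀ᵐ x ∂μ, ∫ t in (0 : ℝ)..1, f' (x + t • v) = f (x + v) - f x := by
    filter_upwards [hprod.prod_left_ae] with x hx
    exact intervalIntegral_lineDeriv_eq_sub hf hs hderiv (intervalIntegrable_iff.2 hx)
  calc ∫ x, f' x ∂μ = ∫ t in (0 : ℝ)..1, ∫ x, f' (x + t • v) ∂μ := by
        simp [integral_add_right_eq_self]
    _ = ∫ x, (∫ t in (0 : ℝ)..1, f' (x + t • v)) ∂μ := intervalIntegral_integral_swap hprod
    _ = ∫ x, (f (x + v) - f x) ∂μ := integral_congr_ae hslice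
    _ = 0 := by
        rw [integral_sub (hf_int.comp_add_right v) hf_int, integral_add_right_eq_self, sub_self]

end LineDerivative

theorem hasDerivAt_abs_rpow_of_ne_zero {x : ℝ} (hx : x ≠ 0) (p : ℝ) :
    HasDerivAt (fun x : ℝ => |x| ^ p) (|x| ^ p * (p * x⁻¹)) x := by
  convert (hasDerivAt_abs hx).rpow_const (p := p) (Or.inl (abs_ne_zero.2 hx)) using 1
  have hsign : (SignType.sign x : ℝ) / |x| = x⁻¹ := by
    rw [div_eq_iff (abs_ne_zero.2 hx), eq_inv_mul_iff_mul_eq₀ hx, self_mul_sign]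
  rw [Real.rpow_sub_one (abs_ne_zero.2 hx), ← hsign]
  ring

theorem locallyIntegrable_abs_rpow_mul_inv {p : ℝ} (hp : 0 < p) :
    LocallyIntegrable (fun x : ℝ => |x| ^ p * x⁻¹) volume := by
  refine locallyIntegrable_of_norm_le_rpow (C := 1) (α := 1 - p) (by simp) (by simpa using hp)
    (ae_of_all _ fun x => ?_) (by fun_prop)
  rcases eq_or_ne x 0 with rfl | hx
  · simp [Real.rpow_nonneg]
  · simp [Real.abs_rpow_of_nonneg, Real.rpow_sub_one (abs_ne_zero.2 hx), div_eq_mul_inv]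

section LocallyIntegrable

variable {F : Type*} [NormedAddCommGroup F]

theorem locallyIntegrable_comp_measurePreserving {X Y : Type*} [TopologicalSpace X]
    [MeasurableSpace X] [WeaklyLocallyCompactSpace X]
    [TopologicalSpace Y] [T2Space Y] [MeasurableSpace Y] [OpensMeasurableSpace Y]
    {μ : Measure X} {ν : Measure Y} {e : X → Y} (he : MeasurePreserving e μ ν)
    (he_cont : Continuous e) {f : Y → F} (hf : LocallyIntegrable f ν) :
    LocallyIntegrable (f ∘ e) μ := by
  refine fun x => ?_
  obtain ⟨K, hK, hxK⟩ := exists_compact_mem_nhds x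
  have himage : IsCompact (e '' K) := hK.image he_cont
  have hpre : IntegrableOn (f ∘ e) (e ⁻¹' (e '' K)) μ :=
    (he.restrict_preimage himage.measurableSet).integrable_comp_of_integrable
      (hf.integrableOn_isCompact himage)
  exact ⟨K, hxK, hpre.mono_set (Set.subset_preimage_image e K)⟩

variable {ι : Type*} [Fintype ι] {f : ℝ → F}

theorem locallyIntegrable_comp_eval (hf : LocallyIntegrable f volume) (i : ι) :
    LocallyIntegrable (fun l : ι → ℝ => f (l i)) volume := by
  refine locallyIntegrable_iff.2 fun K hK => ?_
  have hproj : ∀ j, IsCompact (Function.eval j '' K) := fun j => hK.image (continuous_apply j)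
  have hbox : IntegrableOn (fun l : ι → ℝ => f (l i))
      (Set.univ.pi fun j => Function.eval j '' K) volume := by
    have (j : ι) : Fact (volume (Function.eval j '' K) < ⊤) := ⟨(hproj j).measure_lt_top⟩
    rw [IntegrableOn, volume_pi, Measure.restrict_pi_pi]
    exact integrable_comp_eval (hf.integrableOn_isCompact (hproj i))
  exact hbox.mono_set (Set.subset_pi_eval_image _ _)

theorem locallyIntegrable_comp_eval_sub_eval (hf : LocallyIntegrable f volume) {i j : ι}
    (hij : i ≠ j) : LocallyIntegrable (fun l : ι → ℝ => f (l i - l j)) volume := by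
  classical
  let shear := Matrix.toLin' (Matrix.TransvectionStruct.mk i j hij (-1 : ℝ)).toMatrix
  have hshear : ∀ l : ι → ℝ, shear l i = l i - l j := fun l => by
    simp [shear, Matrix.transvection, Matrix.single_mulVec, sub_eq_add_neg]
  have h := locallyIntegrable_comp_measurePreserving
    (Real.volume_preserving_transvectionStruct _) shear.continuous_of_finiteDimensional
    (locallyIntegrable_comp_eval hf i)
  simpa only [Function.comp_def, hshear, shear] using h

end LocallyIntegrable

section Coordinates

variable {ι : Type*}

theorem hasLineDerivAt_eval (l v : ι → ℝ) (i : ι) :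
    HasLineDerivAt ℝ (fun l : ι → ℝ => l i) (v i) l v := by
  simpa [HasLineDerivAt] using ((hasDerivAt_id (0 : ℝ)).mul_const (v i)).const_add (l i)

theorem hasLineDerivAt_exp_neg_sum [Fintype ι] {W : ℝ → ℝ} (hW : Differentiable ℝ W)
    (l v : ι → ℝ) :
    HasLineDerivAt ℝ (fun l : ι → ℝ => Real.exp (-∑ i, W (l i)))
      (Real.exp (-∑ i, W (l i)) * -∑ i, v i * deriv W (l i)) l v := by
  have hpot : ∀ i, HasDerivAt (fun t : ℝ => W ((l + t • v) i)) (v i * deriv W (l i)) 0 := fun i =>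
    (HasDerivAt.comp_of_eq 0 (hW (l i)).hasDerivAt (hasLineDerivAt_eval l v i)
      (by simp)).congr_deriv (mul_comm _ _)
  simpa [HasLineDerivAt] using (HasDerivAt.fun_sum fun i (_ : i ∈ Finset.univ) => hpot i).neg.exp

theorem hasLineDerivAt_abs_sub_rpow {β : ℝ} {l v : ι → ℝ} {i j : ι}
    (h : l i = l j → v i = v j) :
    HasLineDerivAt ℝ (fun l : ι → ℝ => |l i - l j| ^ β)
      (|l i - l j| ^ β * (β * ((v i - v j) * (l i - l j)⁻¹))) l v := by
  have hdiff : HasDerivAt (fun t : ℝ => (l + t • v) i - (l + t • v) j) (v i - v j) 0 :=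
    (hasLineDerivAt_eval l v i).fun_sub (hasLineDerivAt_eval l v j)
  rcases eq_or_ne (l i) (l j) with hl | hl
  · simpa [HasLineDerivAt, hl, h hl] using hasDerivAt_const _ _
  · have hrpow := hasDerivAt_abs_rpow_of_ne_zero (sub_ne_zero.2 hl) β
    refine (HasDerivAt.comp_of_eq 0 hrpow hdiff (by simp)).congr_deriv ?_
    ring

theorem countable_setOf_line_collides [Countable ι] (l v : ι → ℝ) :
    {t : ℝ | ¬ ∀ i j, (l + t • v) i = (l + t • v) j → v i = v j}.Countable := by
  have hpair : ∀ i j, {t : ℝ | (l + t • v) i = (l + t • v) j ∧ v i ≠ v j}.Subsingleton :=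
    fun i j s ⟨hs, hv⟩ t ⟨ht, _⟩ => by
      simp only [Pi.add_apply, Pi.smul_apply, smul_eq_mul] at hs ht
      exact mul_right_cancel₀ (sub_ne_zero.2 hv) (by linear_combination hs - ht)
  simp only [not_forall, exists_prop, Set.ofPred_exists]
  exact Set.countable_iUnion fun i => Set.countable_iUnion fun j => (hpair i j).countable

end Coordinates

section RadialCutoff

variable {ι : Type*} [Fintype ι] {c : ℝ} {f χ : ℝ → ℝ}

/-- The squared Euclidean norm on `ι → ℝ`, whose own norm is the sup norm. -/
def sumSq (l : ι → ℝ) : ℝ := ∑ i, l i ^ 2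

theorem contDiff_sumSq {n : WithTop ℕ∞} : ContDiff ℝ n (sumSq (ι := ι)) := by
  unfold sumSq
  fun_prop

theorem hasCompactSupport_comp_sumSq (hχ : HasCompactSupport χ) :
    HasCompactSupport fun l : ι → ℝ => χ (sumSq l) := by
  obtain ⟨R, hR⟩ := hχ.isCompact.isBounded.subset_closedBall (0 : ℝ)
  refine HasCompactSupport.intro (isCompact_closedBall 0 (√R)) fun l hl => ?_
  refine image_eq_zero_of_notMem_tsupport fun hmem => hl ?_
  have hsum : sumSq l ≤ R := (le_abs_self _).trans (by simpa using hR hmem)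
  have hcoord : ∀ i, l i ^ 2 ≤ sumSq l := fun i =>
    Finset.single_le_sum (f := fun i => l i ^ 2) (fun _ _ => sq_nonneg _) (Finset.mem_univ i)
  rw [mem_closedBall_zero_iff, pi_norm_le_iff_of_nonneg (Real.sqrt_nonneg R)]
  exact fun i => Real.abs_le_sqrt ((hcoord i).trans hsum)

theorem hasLineDerivAt_comp_sumSq [DecidableEq ι] (hχ : Differentiable ℝ χ) (l : ι → ℝ) (i : ι) :
    HasLineDerivAt ℝ (fun l : ι → ℝ => χ (sumSq l)) (deriv χ (sumSq l) * (2 * l i)) l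
      (Pi.single i 1) := by
  have hsq : HasLineDerivAt ℝ (sumSq (ι := ι)) (2 * l i) l (Pi.single i 1) := by
    refine (HasDerivAt.fun_sum fun j (_ : j ∈ Finset.univ) =>
      HasDerivAt.fun_pow (hasLineDerivAt_eval l (Pi.single i 1) j) 2).congr_deriv ?_
    simp [Pi.single_apply]
  exact HasDerivAt.comp_of_eq 0 (hχ _).hasDerivAt hsq (by simp)

/-- The truncation `c χ f + ∇χ` of the vector field `c f(λᵢ)` by the radial cutoff `χ(∑ λᵢ²)`. If
`c (f x + x)` is the derivative of the potential, the term `∇χ` makes the products of `∇χ` with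
`f(λᵢ)` cancel in the divergence with respect to the log-gas density. -/
noncomputable def cutoffField (c : ℝ) (f χ : ℝ → ℝ) (l : ι → ℝ) (i : ι) : ℝ :=
  c * (χ (sumSq l) * f (l i)) + deriv χ (sumSq l) * (2 * l i)

theorem contDiff_cutoffField (hf : ContDiff ℝ 1 f) (hχ : ContDiff ℝ 2 χ) :
    ContDiff ℝ 1 (cutoffField (ι := ι) c f χ) := by
  have hq := contDiff_sumSq (ι := ι) (n := 1)
  have hχ' : ContDiff ℝ 1 (deriv χ) := hχ.deriv'
  refine contDiff_pi.2 fun i => ?_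
  exact (contDiff_const.mul (((hχ.of_le one_le_two).comp hq).mul (hf.comp (by fun_prop)))).add
    ((hχ'.comp hq).mul (by fun_prop))

theorem hasCompactSupport_cutoffField (hχ : HasCompactSupport χ) :
    HasCompactSupport (cutoffField (ι := ι) c f χ) := by
  have hsplit : cutoffField (ι := ι) c f χ =
      (fun l : ι → ℝ => χ (sumSq l)) • (fun (l : ι → ℝ) i => c * f (l i)) +
        (fun l : ι → ℝ => deriv χ (sumSq l)) • fun (l : ι → ℝ) i => 2 * l i := by
    ext l i
    simp only [cutoffField, Pi.add_apply, Pi.smul_apply', Pi.smul_apply, smul_eq_mul]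
    ring
  rw [hsplit]
  exact (hasCompactSupport_comp_sumSq hχ).smul_right.add
    (hasCompactSupport_comp_sumSq hχ.deriv).smul_right

end RadialCutoff

section LogGas

variable {ι : Type*} [Fintype ι] [LinearOrder ι]

variable (ι) in
/-- The pairs `(i, j)` with `i < j`, one for each pair of distinct particles. -/
def orderedPairs : Finset (ι × ι) := Finset.univ.filter fun p => p.1 < p.2

/-- The power `|Δ|^β` of the Vandermonde determinant of the particle positions. -/
noncomputable def vandermondeRpow (β : ℝ) (l : ι → ℝ) : ℝ :=
  ∏ p ∈ orderedPairs ι, |l p.1 - l p.2| ^ β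

/-- The unnormalized density of the log-gas at inverse temperature `β` with external potential `W`
(into which the inverse temperature of the potential term is absorbed). -/
noncomputable def logGasWeight (β : ℝ) (W : ℝ → ℝ) (l : ι → ℝ) : ℝ :=
  vandermondeRpow β l * Real.exp (-∑ i, W (l i))

/-- The logarithmic interaction force on particle `i`; a particle at the same position as `i`
contributes `0⁻¹ = 0`. -/
noncomputable def coulombForce (l : ι → ℝ) (i : ι) : ℝ :=
  ∑ j ∈ Finset.univ.erase i, (l i - l j)⁻¹

/-- The `i`-th component of the gradient of `log (logGasWeight β W)`, off collisions. -/
noncomputable def logGasScore (β : ℝ) (W : ℝ → ℝ) (l : ι → ℝ) (i : ι) : ℝ :=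
  β * coulombForce l i - deriv W (l i)

/-- The divergence of the vector field `X` with respect to the density `w = logGasWeight β W`,
that is `w⁻¹ div (w X)` off collisions. -/
noncomputable def logGasDivergence (β : ℝ) (W : ℝ → ℝ) (X : (ι → ℝ) → ι → ℝ) (l : ι → ℝ) : ℝ :=
  ∑ i, (lineDeriv ℝ (fun l => X l i) l (Pi.single i 1) + X l i * logGasScore β W l i)

/-- The divergence `logGasDivergence β W` of the vector field `λ ↦ (f(λᵢ))ᵢ`, whose expectation is
the left-hand side of the loop equation. -/
noncomputable def loopObservable (β : ℝ) (W f : ℝ → ℝ) (l : ι → ℝ) : ℝ :=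
  ∑ i, (deriv f (l i) + f (l i) * logGasScore β W l i)

variable {β : ℝ} {W : ℝ → ℝ}

theorem sum_sum_erase_eq_sum_orderedPairs (h : ι → ι → ℝ) :
    ∑ i, ∑ j ∈ Finset.univ.erase i, h i j = ∑ p ∈ orderedPairs ι, (h p.1 p.2 + h p.2 p.1) := by
  have hsplit : ∀ i j, (if j ≠ i then h i j else 0) =
      (if i < j then h i j else 0) + if j < i then h i j else 0 := fun i j => by
    rcases lt_trichotomy i j with hij | rfl | hij
    · simp [hij, hij.ne', hij.not_gt]
    · simp
    · simp [hij, hij.ne, hij.not_gt]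
  simp only [← Finset.filter_ne', Finset.sum_filter, hsplit, orderedPairs, Fintype.sum_prod_type,
    Finset.sum_add_distrib]
  congr 1
  exact Finset.sum_comm

theorem sum_mul_coulombForce (v l : ι → ℝ) :
    ∑ i, v i * coulombForce l i =
      ∑ p ∈ orderedPairs ι, (v p.1 - v p.2) * (l p.1 - l p.2)⁻¹ := by
  simp only [coulombForce, Finset.mul_sum, sum_sum_erase_eq_sum_orderedPairs]
  refine Finset.sum_congr rfl fun p _ => ?_
  rw [← neg_sub (l p.1) (l p.2), inv_neg]
  ring

theorem abs_sum_self_mul_coulombForce_le (l : ι → ℝ) :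
    |∑ i, l i * coulombForce l i| ≤ (orderedPairs ι).card := by
  rw [sum_mul_coulombForce, Finset.card_eq_sum_ones, Nat.cast_sum, Nat.cast_one]
  refine (Finset.abs_sum_le_sum_abs _ _).trans (Finset.sum_le_sum fun p _ => ?_)
  rw [← div_eq_mul_inv]
  rcases eq_or_ne (l p.1 - l p.2) 0 with h | h <;> simp [h]

theorem vandermondeRpow_nonneg (l : ι → ℝ) : 0 ≤ vandermondeRpow β l :=
  Finset.prod_nonneg fun _ _ => by positivity

theorem logGasWeight_nonneg (l : ι → ℝ) : 0 ≤ logGasWeight β W l :=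
  mul_nonneg (vandermondeRpow_nonneg l) (Real.exp_nonneg _)

theorem continuous_vandermondeRpow (hβ : 0 ≤ β) : Continuous (vandermondeRpow (ι := ι) β) :=
  continuous_finsetProd _ fun _ _ => .rpow_const (by fun_prop) fun _ => Or.inr hβ

theorem continuous_logGasWeight (hβ : 0 ≤ β) (hW : Continuous W) :
    Continuous (logGasWeight (ι := ι) β W) :=
  (continuous_vandermondeRpow hβ).mul (by fun_prop)

theorem sum_mul_logGasScore (v l : ι → ℝ) :
    ∑ i, v i * logGasScore β W l i =
      β * ∑ i, v i * coulombForce l i - ∑ i, v i * deriv W (l i) := by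
  rw [Finset.mul_sum, ← Finset.sum_sub_distrib]
  exact Finset.sum_congr rfl fun i _ => by rw [logGasScore]; ring

theorem hasLineDerivAt_vandermondeRpow {l v : ι → ℝ} (h : ∀ i j, l i = l j → v i = v j) :
    HasLineDerivAt ℝ (vandermondeRpow β)
      (vandermondeRpow β l * (β * ∑ i, v i * coulombForce l i)) l v := by
  refine (HasDerivAt.fun_finsetProd (u := orderedPairs ι) fun p _ =>
    hasLineDerivAt_abs_sub_rpow (β := β) (h p.1 p.2)).congr_deriv ?_
  simp only [sum_mul_coulombForce, Finset.mul_sum]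
  refine Finset.sum_congr rfl fun p hp => ?_
  rw [vandermondeRpow, ← Finset.mul_prod_erase _ _ hp, zero_smul, add_zero, smul_eq_mul]
  ring

theorem hasLineDerivAt_logGasWeight (hW : Differentiable ℝ W) {l v : ι → ℝ}
    (h : ∀ i j, l i = l j → v i = v j) :
    HasLineDerivAt ℝ (logGasWeight β W)
      (logGasWeight β W l * ∑ i, v i * logGasScore β W l i) l v := by
  refine (HasDerivAt.mul (hasLineDerivAt_vandermondeRpow h)
    (hasLineDerivAt_exp_neg_sum hW l v)).congr_deriv ?_
  rw [sum_mul_logGasScore, logGasWeight, zero_smul, add_zero]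
  ring

theorem locallyIntegrable_logGasWeight_mul_inv (hβ : 0 < β) (hW : Continuous W) {p : ι × ι}
    (hp : p ∈ orderedPairs ι) :
    LocallyIntegrable (fun l => logGasWeight β W l * (l p.1 - l p.2)⁻¹) volume := by
  have hpair : LocallyIntegrable
      (fun l : ι → ℝ => |l p.1 - l p.2| ^ β * (l p.1 - l p.2)⁻¹) volume :=
    locallyIntegrable_comp_eval_sub_eval (locallyIntegrable_abs_rpow_mul_inv hβ)
      (Finset.mem_filter.1 hp).2.ne
  have hrest : Continuous fun l : ι → ℝ =>
      (∏ q ∈ (orderedPairs ι).erase p, |l q.1 - l q.2| ^ β) * Real.exp (-∑ i, W (l i)) :=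
    (continuous_finsetProd _ fun _ _ => .rpow_const (by fun_prop) fun _ => Or.inr hβ.le).mul
      (by fun_prop)
  convert hpair.continuous_mul hrest using 2 with l
  rw [logGasWeight, vandermondeRpow, ← Finset.mul_prod_erase _ _ hp]
  ring

theorem locallyIntegrable_logGasWeight_mul_score (hβ : 0 < β) (hW : ContDiff ℝ 1 W) (v : ι → ℝ) :
    LocallyIntegrable (fun l => logGasWeight β W l * ∑ i, v i * logGasScore β W l i) volume := by
  have hforce := locallyIntegrable_finsetSum (orderedPairs ι) fun p hp =>
    (locallyIntegrable_logGasWeight_mul_inv hβ hW.continuous hp).smul (β * (v p.1 - v p.2))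
  have hpot : Continuous fun l : ι → ℝ => logGasWeight β W l * ∑ i, v i * deriv W (l i) := by
    have := hW.continuous_deriv le_rfl
    exact (continuous_logGasWeight hβ.le hW.continuous).mul (by fun_prop)
  convert hforce.sub hpot.locallyIntegrable using 2 with l
  simp only [sum_mul_logGasScore, sum_mul_coulombForce, mul_sub, Finset.mul_sum, Pi.sub_apply,
    Pi.smul_apply, smul_eq_mul]
  congr 1
  exact Finset.sum_congr rfl fun p _ => by ring

section IntegrationByParts

variable {B : (ι → ℝ) → ℝ}

theorem integrable_logGasWeight_mul_lineDeriv_add (hβ : 0 < β) (hW : ContDiff ℝ 1 W)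
    (hB : ContDiff ℝ 1 B) (hB_supp : HasCompactSupport B) (v : ι → ℝ) :
    Integrable (fun l => logGasWeight β W l *
      (lineDeriv ℝ B l v + B l * ∑ i, v i * logGasScore β W l i)) volume := by
  have hlineDeriv : (fun l => lineDeriv ℝ B l v) = fun l => fderiv ℝ B l v :=
    funext fun l => (hB.differentiable one_ne_zero l).lineDeriv_eq_fderiv
  have hsmooth : Integrable (fun l => logGasWeight β W l * lineDeriv ℝ B l v) volume := by
    have hcont : Continuous fun l => fderiv ℝ B l v :=
      (hB.continuous_fderiv one_ne_zero).clm_apply continuous_const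
    rw [← hlineDeriv] at hcont
    refine ((continuous_logGasWeight hβ.le hW.continuous).mul hcont).integrable_of_hasCompactSupport
      (HasCompactSupport.mul_left ?_)
    rw [hlineDeriv]
    exact hB_supp.fderiv_apply ℝ v
  have hsing := (locallyIntegrable_logGasWeight_mul_score hβ hW v)
    |>.integrable_smul_left_of_hasCompactSupport hB.continuous hB_supp
  refine (hsmooth.add hsing).congr (ae_of_all _ fun l => ?_)
  simp only [Pi.add_apply, smul_eq_mul]
  ring

theorem integral_logGasWeight_mul_lineDeriv_add_eq_zero (hβ : 0 < β) (hW : ContDiff ℝ 1 W)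
    (hB : ContDiff ℝ 1 B) (hB_supp : HasCompactSupport B) (v : ι → ℝ) :
    ∫ l, logGasWeight β W l *
      (lineDeriv ℝ B l v + B l * ∑ i, v i * logGasScore β W l i) = 0 := by
  have hcont := (continuous_logGasWeight (ι := ι) hβ.le hW.continuous).mul hB.continuous
  refine integral_eq_zero_of_hasLineDerivAt_off_countable
    (s := {l | ¬ ∀ i j, l i = l j → v i = v j}) hcont
    (hcont.integrable_of_hasCompactSupport hB_supp.mul_left)
    (integrable_logGasWeight_mul_lineDeriv_add hβ hW hB hB_supp v)
    (fun l => countable_setOf_line_collides l v) fun l hl => ?_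
  have hweight := hasLineDerivAt_logGasWeight (β := β) (hW.differentiable one_ne_zero)
    (not_not.1 hl)
  have hfield := (hB.differentiable one_ne_zero l).lineDifferentiableAt (v := v) |>.hasLineDerivAt
  refine (HasDerivAt.mul hweight hfield).congr_deriv ?_
  rw [zero_smul, add_zero]
  ring

theorem integral_logGasWeight_mul_logGasDivergence_eq_zero (hβ : 0 < β) (hW : ContDiff ℝ 1 W)
    {X : (ι → ℝ) → ι → ℝ} (hX : ContDiff ℝ 1 X) (hX_supp : HasCompactSupport X) :
    ∫ l, logGasWeight β W l * logGasDivergence β W X l = 0 := by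
  have hcoord : ∀ i, ContDiff ℝ 1 fun l => X l i := contDiff_pi.1 hX
  have hcoord_supp : ∀ i, HasCompactSupport fun l => X l i := fun i =>
    hX_supp.comp_left (g := fun x : ι → ℝ => x i) rfl
  have hterm : ∀ i l, X l i * logGasScore β W l i =
      X l i * ∑ j, (Pi.single i 1 : ι → ℝ) j * logGasScore β W l j := fun i l => by
    simp [Pi.single_apply]
  simp only [logGasDivergence, Finset.mul_sum]
  simp only [hterm]
  rw [integral_finsetSum]
  · exact Finset.sum_eq_zero fun i _ =>
      integral_logGasWeight_mul_lineDeriv_add_eq_zero hβ hW (hcoord i) (hcoord_supp i) _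
  · exact fun i _ =>
      integrable_logGasWeight_mul_lineDeriv_add hβ hW (hcoord i) (hcoord_supp i) _

end IntegrationByParts

section CutoffRemainder

/-- The contribution of `χ'` and `χ''` to the divergence of `cutoffField c f χ`. -/
noncomputable def cutoffRemainder (β c : ℝ) (χ : ℝ → ℝ) (l : ι → ℝ) : ℝ :=
  4 * sumSq l * deriv (deriv χ) (sumSq l) +
    2 * deriv χ (sumSq l) *
      (Fintype.card ι + β * ∑ i, l i * coulombForce l i - c * sumSq l)

variable {c : ℝ} {f χ : ℝ → ℝ}

theorem logGasDivergence_cutoffField (hf : Differentiable ℝ f) (hχ : ContDiff ℝ 2 χ)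
    (hW : ∀ x, deriv W x = c * (f x + x)) (l : ι → ℝ) :
    logGasDivergence β W (cutoffField c f χ) l =
      c * χ (sumSq l) * loopObservable β W f l + cutoffRemainder β c χ l := by
  have hderiv : ∀ i, lineDeriv ℝ (fun l => cutoffField c f χ l i) l (Pi.single i 1) =
      c * (deriv χ (sumSq l) * (2 * l i) * f (l i) + χ (sumSq l) * deriv f (l i)) +
        (deriv (deriv χ) (sumSq l) * (2 * l i) * (2 * l i) + deriv χ (sumSq l) * 2) := fun i => by
    have heval : HasLineDerivAt ℝ (fun l : ι → ℝ => l i) 1 l (Pi.single i 1) := by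
      simpa using hasLineDerivAt_eval l (Pi.single i 1) i
    have hfi : HasLineDerivAt ℝ (fun l : ι → ℝ => f (l i)) (deriv f (l i)) l (Pi.single i 1) :=
      (HasDerivAt.comp_of_eq 0 (hf (l i)).hasDerivAt heval (by simp)).congr_deriv (mul_one _)
    have hχi := hasLineDerivAt_comp_sumSq (hχ.differentiable two_ne_zero) l i
    have hχ'i := hasLineDerivAt_comp_sumSq (hχ.differentiable_deriv_two) l i
    refine HasLineDerivAt.lineDeriv ?_
    refine (((HasDerivAt.fun_mul hχi hfi).const_mul c).fun_add
      (HasDerivAt.fun_mul hχ'i (HasDerivAt.const_mul 2 heval))).congr_deriv ?_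
    simp
  have hterm : ∀ i, lineDeriv ℝ (fun l => cutoffField c f χ l i) l (Pi.single i 1) +
        cutoffField c f χ l i * logGasScore β W l i =
      c * χ (sumSq l) * (deriv f (l i) + f (l i) * logGasScore β W l i) +
        (4 * deriv (deriv χ) (sumSq l) * l i ^ 2 +
          2 * deriv χ (sumSq l) * (1 + β * (l i * coulombForce l i) - c * l i ^ 2)) := fun i => by
    rw [hderiv, cutoffField, logGasScore, hW]
    ring
  simp only [logGasDivergence, loopObservable, hterm, Finset.sum_add_distrib,
    Finset.sum_sub_distrib, ← Finset.mul_sum, cutoffRemainder]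
  simp only [Finset.sum_const, Finset.card_univ, nsmul_one, sumSq]
  ring

theorem cutoffRemainder_comp_mul (β c ε : ℝ) (χ : ℝ → ℝ) (l : ι → ℝ) :
    cutoffRemainder β c (fun s => χ (ε * s)) l =
      4 * ε * (ε * sumSq l * deriv (deriv χ) (ε * sumSq l)) +
        2 * ε * deriv χ (ε * sumSq l) *
          (Fintype.card ι + β * ∑ i, l i * coulombForce l i) -
            2 * c * (ε * sumSq l * deriv χ (ε * sumSq l)) := by
  have hderiv : ∀ φ : ℝ → ℝ, deriv (fun s => φ (ε * s)) = fun s => ε * deriv φ (ε * s) :=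
    fun φ => funext fun s => deriv_comp_mul_left ε φ s
  rw [cutoffRemainder, hderiv, deriv_const_mul_field', hderiv]
  ring

theorem tendsto_cutoffRemainder_comp_mul (β c : ℝ) (hχ : ContDiff ℝ 2 χ) (l : ι → ℝ) :
    Tendsto (fun ε : ℝ => cutoffRemainder β c (fun s => χ (ε * s)) l) (𝓝 0) (𝓝 0) := by
  have := hχ.continuous_deriv one_le_two
  have := hχ.deriv'.continuous_deriv le_rfl
  simp only [cutoffRemainder_comp_mul]
  exact Continuous.tendsto' (by fun_prop) _ _ (by simp)

theorem exists_abs_cutoffRemainder_comp_mul_le (β c : ℝ) (hχ : ContDiff ℝ 2 χ)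
    (hχ_supp : HasCompactSupport χ) :
    ∃ C, ∀ ε ∈ Set.Ioc (0 : ℝ) 1, ∀ l : ι → ℝ,
      |cutoffRemainder β c (fun s => χ (ε * s)) l| ≤ C := by
  have hχ' := hχ.continuous_deriv one_le_two
  have hχ'' := hχ.deriv'.continuous_deriv le_rfl
  obtain ⟨C₁, hC₁⟩ := hχ_supp.deriv.exists_bound_of_continuous hχ'
  obtain ⟨C₂, hC₂⟩ := (hχ_supp.deriv.mul_left (f := id)).exists_bound_of_continuous
    (continuous_id.mul hχ')
  obtain ⟨C₃, hC₃⟩ := (hχ_supp.deriv.deriv.mul_left (f := id)).exists_bound_of_continuous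
    (continuous_id.mul hχ'')
  simp only [Real.norm_eq_abs, Pi.mul_apply, id_eq] at hC₁ hC₂ hC₃
  refine ⟨4 * C₃ + 2 * C₁ * (Fintype.card ι + |β| * (orderedPairs ι).card) + 2 * |c| * C₂,
    fun ε ⟨hε₀, hε₁⟩ l => ?_⟩
  have hε : |ε| ≤ 1 := by rwa [abs_of_pos hε₀]
  have hvirial : |Fintype.card ι + β * ∑ i, l i * coulombForce l i| ≤
      Fintype.card ι + |β| * (orderedPairs ι).card := by
    refine (abs_add_le _ _).trans ?_
    rw [Nat.abs_cast, abs_mul]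
    gcongr
    exact abs_sum_self_mul_coulombForce_le l
  rw [cutoffRemainder_comp_mul]
  calc _ ≤ 4 * |ε| * |ε * sumSq l * deriv (deriv χ) (ε * sumSq l)| +
        2 * |ε| * |deriv χ (ε * sumSq l)| * |Fintype.card ι + β * ∑ i, l i * coulombForce l i| +
          2 * |c| * |ε * sumSq l * deriv χ (ε * sumSq l)| := by
        refine (abs_sub _ _).trans ((add_le_add_left (abs_add_le _ _) _).trans_eq ?_)
        simp only [abs_mul, Nat.abs_ofNat]
    _ ≤ 4 * 1 * C₃ + 2 * 1 * C₁ * (Fintype.card ι + |β| * (orderedPairs ι).card) +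
          2 * |c| * C₂ := by
        have hC₁_nonneg : 0 ≤ C₁ := (abs_nonneg _).trans (hC₁ 0)
        gcongr
        exacts [hC₃ _, hC₁ _, hC₂ _]
    _ = _ := by ring

theorem measurable_cutoffRemainder (β c : ℝ) (hχ : ContDiff ℝ 2 χ) :
    Measurable (cutoffRemainder (ι := ι) β c χ) := by
  have := (hχ.continuous_deriv one_le_two).measurable
  have := (hχ.deriv'.continuous_deriv le_rfl).measurable
  unfold cutoffRemainder coulombForce sumSq
  fun_prop

theorem tendsto_integral_cutoff_add_remainder {ν : Measure (ι → ℝ)} {h w : (ι → ℝ) → ℝ}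
    (hh : Integrable h ν) (hw : Integrable w ν) (β c : ℝ) (hχ : ContDiff ℝ 2 χ)
    (hχ_supp : HasCompactSupport χ) :
    Tendsto (fun ε => ∫ l, (c * χ (ε * sumSq l) * h l +
        w l * cutoffRemainder β c (fun s => χ (ε * s)) l) ∂ν)
      (𝓝[>] 0) (𝓝 (∫ l, c * χ 0 * h l ∂ν)) := by
  have hscaled : ∀ ε : ℝ, ContDiff ℝ 2 fun s => χ (ε * s) := fun ε => hχ.comp (by fun_prop)
  obtain ⟨C₀, hC₀⟩ := hχ_supp.exists_bound_of_continuous hχ.continuous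
  obtain ⟨C, hC⟩ := exists_abs_cutoffRemainder_comp_mul_le (ι := ι) β c hχ hχ_supp
  refine tendsto_integral_filter_of_dominated_convergence (fun l => |c| * C₀ * |h l| + |w l| * C)
    (Eventually.of_forall fun ε => ?_) ?_ ((hh.abs.const_mul _).add (hw.abs.mul_const _))
    (ae_of_all _ fun l => ?_)
  · have hcut : Continuous fun l : ι → ℝ => c * χ (ε * sumSq l) :=
      continuous_const.mul ((hscaled ε).continuous.comp (contDiff_sumSq (n := 0)).continuous)
    exact (hcut.aestronglyMeasurable.mul hh.1).add
      (hw.1.mul (measurable_cutoffRemainder β c (hscaled ε)).aestronglyMeasurable)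
  · filter_upwards [Ioc_mem_nhdsGT zero_lt_one] with ε hε
    refine ae_of_all _ fun l => (norm_add_le _ _).trans ?_
    simp only [Real.norm_eq_abs, abs_mul]
    gcongr
    exacts [hC₀ _, hC ε hε l]
  · have hcut : Tendsto (fun ε : ℝ => χ (ε * sumSq l)) (𝓝 0) (𝓝 (χ 0)) :=
      (hχ.continuous.comp (continuous_mul_const (sumSq l))).tendsto' _ _ (by simp)
    have hrem := tendsto_cutoffRemainder_comp_mul β c hχ l
    have hsum := ((hcut.const_mul c).mul_const (h l)).add (hrem.const_mul (w l))
    rw [mul_zero, add_zero] at hsum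
    exact hsum.mono_left nhdsWithin_le_nhds

theorem integral_cutoff_mul_loopObservable_add_remainder_eq_zero (hβ : 0 < β)
    (hf : ContDiff ℝ 1 f) (hW : ContDiff ℝ 1 W) (hW' : ∀ x, deriv W x = c * (f x + x))
    (hχ : ContDiff ℝ 2 χ) (hχ_supp : HasCompactSupport χ) :
    ∫ l : ι → ℝ, (c * χ (sumSq l) * (logGasWeight β W l * loopObservable β W f l) +
      logGasWeight β W l * cutoffRemainder β c χ l) = 0 := by
  refine (integral_congr_ae (ae_of_all _ fun l => ?_)).trans
    (integral_logGasWeight_mul_logGasDivergence_eq_zero hβ hW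
      (contDiff_cutoffField (c := c) hf hχ) (hasCompactSupport_cutoffField hχ_supp))
  simp only [logGasDivergence_cutoffField (hf.differentiable one_ne_zero) hχ hW']
  ring

theorem integral_logGasWeight_mul_loopObservable_eq_zero (hβ : 0 < β) (hc : c ≠ 0)
    (hf : ContDiff ℝ 1 f) (hW : ContDiff ℝ 1 W) (hW' : ∀ x, deriv W x = c * (f x + x))
    (hweight : Integrable (logGasWeight (ι := ι) β W) volume)
    (hloop : Integrable (fun l : ι → ℝ => logGasWeight β W l * loopObservable β W f l) volume) :
    ∫ l : ι → ℝ, logGasWeight β W l * loopObservable β W f l = 0 := by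
  let g : ContDiffBump (0 : ℝ) := default
  have hlim := tendsto_integral_cutoff_add_remainder hloop hweight β c g.contDiff
    g.hasCompactSupport
  have hzero := tendsto_nhds_unique hlim <| tendsto_const_nhds.congr' <| by
    filter_upwards [self_mem_nhdsWithin] with ε hε
    exact (integral_cutoff_mul_loopObservable_add_remainder_eq_zero hβ hf hW hW'
      (g.contDiff.comp (contDiff_const_smul ε))
      (g.hasCompactSupport.comp_homeomorph (Homeomorph.mulLeft₀ ε (ne_of_gt hε)))).symm
  rw [integral_const_mul, g.eventuallyEq_one.eq_of_nhds, Pi.one_apply, mul_one] at hzero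
  exact (mul_eq_zero.1 hzero).resolve_left hc

end CutoffRemainder

theorem integral_loopObservable_withDensity_eq_zero {c : ℝ} {f : ℝ → ℝ} (hβ : 0 < β)
    (hc : c ≠ 0) (hf : ContDiff ℝ 1 f) (hW : ContDiff ℝ 1 W)
    (hW' : ∀ x, deriv W x = c * (f x + x)) {Z : ℝ} (hZ : 0 < Z) {μ : Measure (ι → ℝ)}
    [IsFiniteMeasure μ]
    (hμ : μ = volume.withDensity fun l => ENNReal.ofReal (Z⁻¹ * logGasWeight β W l))
    (hloop : Integrable (loopObservable β W f) μ) :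
    ∫ l, loopObservable β W f l ∂μ = 0 := by
  have hmeas : Measurable fun l : ι → ℝ => ENNReal.ofReal (Z⁻¹ * logGasWeight β W l) :=
    ((continuous_logGasWeight hβ.le hW.continuous).measurable.const_mul _).ennreal_ofReal
  have hfin : ∀ᵐ l : ι → ℝ, ENNReal.ofReal (Z⁻¹ * logGasWeight β W l) < ⊤ :=
    ae_of_all _ fun _ => ENNReal.ofReal_lt_top
  have hdensity : ∀ (h : (ι → ℝ) → ℝ) l,
      (ENNReal.ofReal (Z⁻¹ * logGasWeight β W l)).toReal • h l =
        Z⁻¹ * (logGasWeight β W l * h l) := fun h l => by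
    rw [ENNReal.toReal_ofReal (mul_nonneg (inv_nonneg.2 hZ.le) (logGasWeight_nonneg l)),
      smul_eq_mul, mul_assoc]
  have hintegrable : ∀ h : (ι → ℝ) → ℝ, Integrable h μ →
      Integrable (fun l => logGasWeight β W l * h l) volume := fun h hh => by
    rw [hμ, integrable_withDensity_iff_integrable_smul' hmeas hfin] at hh
    simpa only [hdensity, integrable_const_mul_iff (inv_pos.2 hZ).ne'.isUnit] using hh
  rw [hμ, integral_withDensity_eq_integral_toReal_smul hmeas hfin]
  simp only [hdensity]
  rw [integral_const_mul, integral_logGasWeight_mul_loopObservable_eq_zero hβ hc hf hW hW'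
    (by simpa using hintegrable _ (integrable_const 1)) (hintegrable _ hloop), mul_zero]

theorem sum_deriv_add_sum_mul_eq_neg_half_mul_loopObservable {f : ℝ → ℝ} {n : ℝ} (hn : n ≠ 0)
    (hW' : ∀ x, deriv W x = β * n / 2 * (f x + x)) (l : ι → ℝ) :
    -(1 / 2) * ∑ i, deriv f (l i) +
        β * n / 4 * ∑ i, f (l i) * (f (l i) + l i - 2 / n * coulombForce l i) =
      -(1 / 2) * loopObservable β W f l := by
  have hforce : ∀ i, β * n / 4 * (f (l i) * (f (l i) + l i - 2 / n * coulombForce l i)) =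
      -(1 / 2) * (f (l i) * logGasScore β W l i) := fun i => by
    rw [logGasScore, hW']
    field_simp
    ring
  rw [loopObservable, Finset.sum_add_distrib, mul_add, Finset.mul_sum (a := β * n / 4)]
  simp only [hforce, Finset.mul_sum]

end LogGas

theorem stmt_15_general (N : ℕ) (hN : N ≠ 0) (β : ℝ) (hβ : 0 < β)
    (U : ℝ → ℝ) (hU : ContDiff ℝ 2 U) (Z : ℝ) (hZ : 0 < Z)
    (μ : Measure (Fin N → ℝ)) [IsFiniteMeasure μ]
    (hμ : μ = volume.withDensity (fun l =>
      ENNReal.ofReal (Z⁻¹ *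
        (∏ p ∈ Finset.univ.filter (fun p : Fin N × Fin N => p.1 < p.2), |l p.1 - l p.2| ^ β) *
        Real.exp (-(β * N) * ∑ i, (U (l i) / 2 + (l i) ^ 2 / 4)))))
    (hint : Integrable (fun l => -(1 / 2) * ∑ i, deriv (deriv U) (l i)
        + (β * N / 4) * ∑ i, deriv U (l i) *
            (deriv U (l i) + l i - (2 / N) * ∑ j ∈ Finset.univ.erase i, (l i - l j)⁻¹)) μ) :
    ∫ l, (-(1 / 2) * ∑ i, deriv (deriv U) (l i)
        + (β * N / 4) * ∑ i, deriv U (l i) *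
            (deriv U (l i) + l i - (2 / N) * ∑ j ∈ Finset.univ.erase i, (l i - l j)⁻¹)) ∂μ
      = 0 := by
  let W : ℝ → ℝ := fun x => β * N * (U x / 2 + x ^ 2 / 4)
  have hN' : (N : ℝ) ≠ 0 := Nat.cast_ne_zero.2 hN
  have hW : ContDiff ℝ 1 W := by
    have := hU.of_le one_le_two
    fun_prop
  have hW' : ∀ x, deriv W x = β * N / 2 * (deriv U x + x) := fun x => by
    have hUx := (hU.differentiable two_ne_zero x).hasDerivAt
    rw [(((hUx.div_const 2).fun_add ((hasDerivAt_pow 2 x).div_const 4)).const_mul (β * N)).deriv]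
    ring
  have hloop : ∀ l : Fin N → ℝ, -(1 / 2) * ∑ i, deriv (deriv U) (l i)
      + (β * N / 4) * ∑ i, deriv U (l i) *
          (deriv U (l i) + l i - (2 / N) * ∑ j ∈ Finset.univ.erase i, (l i - l j)⁻¹) =
      -(1 / 2) * loopObservable β W (deriv U) l := fun l =>
    sum_deriv_add_sum_mul_eq_neg_half_mul_loopObservable hN' hW' l
  have hweight : ∀ l : Fin N → ℝ, Z⁻¹ *
      (∏ p ∈ Finset.univ.filter (fun p : Fin N × Fin N => p.1 < p.2), |l p.1 - l p.2| ^ β) *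
      Real.exp (-(β * N) * ∑ i, (U (l i) / 2 + (l i) ^ 2 / 4)) =
        Z⁻¹ * logGasWeight β W l := fun l => by
    simp only [logGasWeight, vandermondeRpow, orderedPairs, W, ← Finset.mul_sum, neg_mul, mul_assoc]
  simp only [hloop] at hint ⊢
  simp only [hweight] at hμ
  rw [integral_const_mul, integral_loopObservable_withDensity_eq_zero hβ (by positivity)
    hU.deriv' hW hW' hZ hμ ((integrable_const_mul_iff (by norm_num) _).1 hint), mul_zero]

/-- (First-order loop equation for β-ensembles.)  Let `N ≥ 2`, `β ≥ 1`,
and let `U ∈ C²(ℝ)` with `|U| + |U′| + |U″|` of polynomial growth.  Let `μ` be the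
probability measure on `ℝ^N` with density proportional to
`∏_{i<j} |λᵢ − λⱼ|^β · exp(−βN ∑ᵢ (U(λᵢ)/2 + λᵢ²/4))` with respect to Lebesgue measure.
Then `E^μ[ −½ ∑ᵢ U″(λᵢ) + (βN/4) ∑ᵢ U′(λᵢ)(U′(λᵢ) + λᵢ − (2/N) ∑_{j≠i} 1/(λᵢ−λⱼ)) ] = 0`. -/
theorem stmt_15 (N : ℕ) (hN : 2 ≤ N) (β : ℝ) (hβ : 1 ≤ β)
    (U : ℝ → ℝ) (hU : ContDiff ℝ 2 U)
    (Cg k : ℝ)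
    (hgrowth : ∀ x : ℝ, |U x| + |deriv U x| + |deriv (deriv U) x| ≤ Cg * (1 + |x|) ^ k)
    (Z : ℝ) (hZ : 0 < Z)
    (μ : Measure (Fin N → ℝ)) [IsProbabilityMeasure μ]
    (hμ : μ = volume.withDensity (fun l =>
      ENNReal.ofReal (Z⁻¹ *
        (∏ p ∈ Finset.univ.filter (fun p : Fin N × Fin N => p.1 < p.2), |l p.1 - l p.2| ^ β) *
        Real.exp (-(β * N) * ∑ i, (U (l i) / 2 + (l i) ^ 2 / 4))))) :
    ∫ l, (-(1 / 2) * ∑ i, deriv (deriv U) (l i)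
        + (β * N / 4) * ∑ i, deriv U (l i) *
            (deriv U (l i) + l i - (2 / N) * ∑ j ∈ Finset.univ.erase i, (l i - l j)⁻¹)) ∂μ
      = 0 := by
  -- The Bochner integral of a function that is not integrable is `0`.
  by_contra h
  exact h (stmt_15_general N (by omega) β (by linarith) U hU Z hZ μ hμ (.of_integral_ne_zero h))
end

section
/- For every C₁ > 0 there exist γ₀ > 0 and C > 0, depending only on C₁, such that the following holds. Let m₃, m₄ ∈ ℝ satisfy m₄ − m₃² − 1 ≥ 0 and m₄ ≤ C₁, and let γ ∈ (0, γ₀). Then there exist a probability space carrying independent real random variables ζ_γ and ζ_G, where ζ_G is standard Gaussian (mean 0, variance 1) and ζ_γ has subexponential tails (there exist C₂ > 0 and θ > 1 with P(|ζ_γ| > x) ≤ C₂ e^{−x^{1/θ}} for all x > 0), such that the random variable ζ′ := (1 − γ)^{1/2} ζ_γ + γ^{1/2} ζ_G satisfies E[ζ′] = 0, E[ζ′²] = 1, E[ζ′³] = m₃, and |E[ζ′⁴] − m₄| ≤ C γ. -/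
open MeasureTheory ProbabilityTheory

open Real Finset
open scoped NNReal

/-!
The first three moments of `ζ′` are matched exactly and only the fourth is allowed to move. For
independent `X` (mean `0`, variance `1`) and standard Gaussian `Y`, the variable
`√(1 - γ) X + √γ Y` has mean `0`, variance `1` and third moment `(1 - γ)^(3/2) E X³`, so `X` is
given the third moment `a = m₃ / (1 - γ)^(3/2)`. Some law with three atoms, mean `0` and variance
`1` has third and fourth moments `a` and `b` as soon as `a² + 1 ≤ b`; taking
`b = a² + (m₄ - m₃²)` keeps the pair admissible and moves the fourth moment of `ζ′` by `O(γ)`.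
-/

section GaussianMoments

lemma hasDerivAt_integral_pow_mul_exp_gaussianReal (μ : ℝ) (v : ℝ≥0) (n : ℕ) (t : ℝ) :
    HasDerivAt (fun t ↦ ∫ x, x ^ n * exp (t * x) ∂gaussianReal μ v)
      (∫ x, x ^ (n + 1) * exp (t * x) ∂gaussianReal μ v) t :=
  hasDerivAt_integral_pow_mul_exp_real (X := id) (by simp [integrableExpSet_id_gaussianReal]) n

lemma integral_mul_exp_gaussianReal (μ : ℝ) (v : ℝ≥0) (t : ℝ) :
    ∫ x, x * exp (t * x) ∂gaussianReal μ v =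
      (μ + v * t) * ∫ x, exp (t * x) ∂gaussianReal μ v := by
  have mgf_eq (t : ℝ) : ∫ x, exp (t * x) ∂gaussianReal μ v = exp (μ * t + v * t ^ 2 / 2) :=
    congrFun mgf_id_gaussianReal t
  have exponent_deriv : HasDerivAt (fun t : ℝ ↦ μ * t + v * t ^ 2 / 2) (μ + v * t) t := by
    refine (((hasDerivAt_id t).const_mul μ).add
      ((((hasDerivAt_id t).pow 2).const_mul (v : ℝ)).div_const 2)).congr_deriv ?_
    simp only [id, Nat.cast_ofNat]
    ring
  have mgf_deriv := hasDerivAt_integral_pow_mul_exp_gaussianReal μ v 0 t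
  simp only [pow_zero, one_mul, zero_add, pow_one, mgf_eq] at mgf_deriv
  rw [mgf_deriv.unique exponent_deriv.exp, mgf_eq, mul_comm]

-- Each case differentiates the preceding identity in `t`.
lemma integral_pow_mul_exp_gaussianReal_add_two (μ : ℝ) (v : ℝ≥0) (n : ℕ) (t : ℝ) :
    ∫ x, x ^ (n + 2) * exp (t * x) ∂gaussianReal μ v =
      (μ + v * t) * ∫ x, x ^ (n + 1) * exp (t * x) ∂gaussianReal μ v +
        (n + 1) * v * ∫ x, x ^ n * exp (t * x) ∂gaussianReal μ v := by
  have deriv_moment := hasDerivAt_integral_pow_mul_exp_gaussianReal μ v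
  have deriv_factor (t : ℝ) : HasDerivAt (fun t : ℝ ↦ μ + v * t) v t := by
    simpa using ((hasDerivAt_id t).const_mul (v : ℝ)).const_add μ
  induction n generalizing t with
  | zero =>
    have lhs_deriv := deriv_moment 1 t
    simp only [pow_one, integral_mul_exp_gaussianReal] at lhs_deriv
    have rhs_deriv := (deriv_factor t).mul (deriv_moment 0 t)
    simp only [pow_zero, one_mul] at rhs_deriv
    rw [lhs_deriv.unique rhs_deriv]
    simp only [zero_add, pow_one, pow_zero, one_mul, CharP.cast_eq_zero]
    ring
  | succ n ih =>
    have lhs_deriv := deriv_moment (n + 2) t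
    simp only [ih] at lhs_deriv
    have rhs_deriv := ((deriv_factor t).mul (deriv_moment (n + 1) t)).add
      ((deriv_moment n t).const_mul ((n + 1) * (v : ℝ)))
    rw [lhs_deriv.unique rhs_deriv]
    push_cast
    ring

lemma integral_pow_add_two_gaussianReal (μ : ℝ) (v : ℝ≥0) (n : ℕ) :
    ∫ x, x ^ (n + 2) ∂gaussianReal μ v =
      μ * ∫ x, x ^ (n + 1) ∂gaussianReal μ v + (n + 1) * v * ∫ x, x ^ n ∂gaussianReal μ v := by
  simpa using integral_pow_mul_exp_gaussianReal_add_two μ v n 0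

lemma integral_sq_gaussianReal_zero_one : ∫ x, x ^ 2 ∂gaussianReal 0 1 = 1 := by
  simpa using integral_pow_add_two_gaussianReal 0 1 0

lemma integral_pow_three_gaussianReal_zero_one : ∫ x, x ^ 3 ∂gaussianReal 0 1 = 0 := by
  simpa using integral_pow_add_two_gaussianReal 0 1 1

lemma integral_pow_four_gaussianReal_zero_one : ∫ x, x ^ 4 ∂gaussianReal 0 1 = 3 := by
  rw [integral_pow_add_two_gaussianReal 0 1 2, integral_sq_gaussianReal_zero_one]
  norm_num

end GaussianMoments

section IndependentSum

variable {Ω : Type*} {mΩ : MeasurableSpace Ω} {P : Measure Ω} {X Y : Ω → ℝ}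

lemma integrable_pow_of_memLp [IsFiniteMeasure P] {n k : ℕ} (hX : MemLp X n P) (hk : k ≤ n) :
    Integrable (fun ω ↦ X ω ^ k) P := by
  have hXk : MemLp X k P := hX.mono_exponent (by exact_mod_cast hk)
  refine (integrable_norm_iff (hX.aestronglyMeasurable.pow k)).1 ?_
  simpa using hXk.integrable_norm_pow'

lemma integral_add_pow_of_indepFun [IsFiniteMeasure P] (hXY : X ⟂ᵢ[P] Y) {n : ℕ}
    (hX : MemLp X n P) (hY : MemLp Y n P) :
    ∫ ω, (X ω + Y ω) ^ n ∂P =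
      ∑ k ∈ range (n + 1), (∫ ω, X ω ^ k ∂P) * (∫ ω, Y ω ^ (n - k) ∂P) * n.choose k := by
  have indep (i j : ℕ) : (fun ω ↦ X ω ^ i) ⟂ᵢ[P] (fun ω ↦ Y ω ^ j) :=
    hXY.comp (measurable_id.pow_const i) (measurable_id.pow_const j)
  have integrable_term (k : ℕ) (hk : k ∈ range (n + 1)) :
      Integrable (fun ω ↦ X ω ^ k * Y ω ^ (n - k) * n.choose k) P :=
    ((indep k (n - k)).integrable_mul
      (integrable_pow_of_memLp hX (mem_range_succ_iff.1 hk))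
      (integrable_pow_of_memLp hY (Nat.sub_le n k))).mul_const _
  simp only [add_pow]
  rw [integral_finsetSum _ integrable_term]
  refine sum_congr rfl fun k _ ↦ ?_
  rw [integral_mul_const, (indep k (n - k)).integral_fun_mul_eq_mul_integral
    (hX.aestronglyMeasurable.pow k) (hY.aestronglyMeasurable.pow (n - k))]

lemma integral_mul_add_mul_pow_of_indepFun [IsFiniteMeasure P] (hXY : X ⟂ᵢ[P] Y) {n : ℕ}
    (hX : MemLp X n P) (hY : MemLp Y n P) (a b : ℝ) :
    ∫ ω, (a * X ω + b * Y ω) ^ n ∂P =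
      ∑ k ∈ range (n + 1), (a ^ k * ∫ ω, X ω ^ k ∂P) * (b ^ (n - k) * ∫ ω, Y ω ^ (n - k) ∂P) *
        n.choose k := by
  have indep : (fun ω ↦ a * X ω) ⟂ᵢ[P] (fun ω ↦ b * Y ω) :=
    hXY.comp (measurable_const_mul a) (measurable_const_mul b)
  rw [integral_add_pow_of_indepFun indep (hX.const_mul a) (hY.const_mul b)]
  simp only [mul_pow, integral_const_mul]

end IndependentSum

section GaussianPerturbation

variable {Ω : Type*} {mΩ : MeasurableSpace Ω} {P : Measure Ω} {X Y : Ω → ℝ}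

lemma integral_pow_of_hasLaw {μ : Measure ℝ} (hX : HasLaw X μ P) (n : ℕ) :
    ∫ ω, X ω ^ n ∂P = ∫ x, x ^ n ∂μ :=
  hX.integral_comp (f := fun x ↦ x ^ n) (by fun_prop)

lemma integral_mul_add_mul_gaussian_pow (hXY : X ⟂ᵢ[P] Y) (hY : HasLaw Y (gaussianReal 0 1) P)
    {n : ℕ} (hX : MemLp X n P) (a b : ℝ) :
    ∫ ω, (a * X ω + b * Y ω) ^ n ∂P =
      ∑ k ∈ range (n + 1), (a ^ k * ∫ ω, X ω ^ k ∂P) *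
        (b ^ (n - k) * ∫ y, y ^ (n - k) ∂gaussianReal 0 1) * n.choose k := by
  have := hY.isProbabilityMeasure
  rw [integral_mul_add_mul_pow_of_indepFun hXY hX
    (hY.hasGaussianLaw.memLp (ENNReal.natCast_ne_top n))]
  simp only [integral_pow_of_hasLaw hY]

lemma integral_mul_add_mul_gaussian (hXY : X ⟂ᵢ[P] Y) (hY : HasLaw Y (gaussianReal 0 1) P)
    (hX : MemLp X 1 P) (hX₁ : ∫ ω, X ω ∂P = 0) (a b : ℝ) :
    ∫ ω, (a * X ω + b * Y ω) ∂P = 0 := by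
  have h := integral_mul_add_mul_gaussian_pow hXY hY (n := 1) (by exact_mod_cast hX) a b
  simpa [sum_range_succ, hX₁] using h

lemma integral_mul_add_mul_gaussian_sq (hXY : X ⟂ᵢ[P] Y) (hY : HasLaw Y (gaussianReal 0 1) P)
    (hX : MemLp X 2 P) (hX₁ : ∫ ω, X ω ∂P = 0) (a b : ℝ) :
    ∫ ω, (a * X ω + b * Y ω) ^ 2 ∂P = a ^ 2 * ∫ ω, X ω ^ 2 ∂P + b ^ 2 := by
  have := hY.isProbabilityMeasure
  rw [integral_mul_add_mul_gaussian_pow hXY hY (by exact_mod_cast hX)]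
  simp [sum_range_succ, hX₁, integral_sq_gaussianReal_zero_one, add_comm]

lemma integral_mul_add_mul_gaussian_pow_three (hXY : X ⟂ᵢ[P] Y)
    (hY : HasLaw Y (gaussianReal 0 1) P) (hX : MemLp X 3 P) (hX₁ : ∫ ω, X ω ∂P = 0) (a b : ℝ) :
    ∫ ω, (a * X ω + b * Y ω) ^ 3 ∂P = a ^ 3 * ∫ ω, X ω ^ 3 ∂P := by
  rw [integral_mul_add_mul_gaussian_pow hXY hY (by exact_mod_cast hX)]
  simp [sum_range_succ, hX₁, integral_pow_three_gaussianReal_zero_one]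

lemma integral_mul_add_mul_gaussian_pow_four (hXY : X ⟂ᵢ[P] Y)
    (hY : HasLaw Y (gaussianReal 0 1) P) (hX : MemLp X 4 P) (hX₁ : ∫ ω, X ω ∂P = 0) (a b : ℝ) :
    ∫ ω, (a * X ω + b * Y ω) ^ 4 ∂P =
      a ^ 4 * ∫ ω, X ω ^ 4 ∂P + 6 * a ^ 2 * b ^ 2 * ∫ ω, X ω ^ 2 ∂P + 3 * b ^ 4 := by
  have := hY.isProbabilityMeasure
  rw [integral_mul_add_mul_gaussian_pow hXY hY (by exact_mod_cast hX)]
  suffices a ^ 4 * ∫ ω, X ω ^ 4 ∂P + 6 * a ^ 2 * b ^ 2 * ∫ ω, X ω ^ 2 ∂P + 3 * b ^ 4 =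
      b ^ 4 * 3 + a ^ 2 * (∫ ω, X ω ^ 2 ∂P) * b ^ 2 * 6 + a ^ 4 * ∫ ω, X ω ^ 4 ∂P by
    simp [this, sum_range_succ, hX₁, integral_sq_gaussianReal_zero_one,
      integral_pow_three_gaussianReal_zero_one, integral_pow_four_gaussianReal_zero_one,
      Nat.choose]
  ring

end GaussianPerturbation

section ThreePointLaw

/-- The masses at `x`, `-u`, `0` of a law with mean `0` and variance `1`, for `x, u > 0`. -/
noncomputable def threePointWeight (x u : ℝ) : Fin 3 → ℝ :=
  ![1 / (x * (x + u)), 1 / (u * (x + u)), 1 - 1 / (x * u)]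

/-- The law on `{x, -u, 0}` with mean `0` and variance `1`, used to realise prescribed third and
fourth moments. It is meant for `x, u > 0` with `1 ≤ x * u`: `ENNReal.ofReal` truncates the mass
at `0` when `x * u < 1`. -/
noncomputable def threePointLaw (x u : ℝ) : Measure ℝ :=
  Measure.sum fun i ↦ ENNReal.ofReal (threePointWeight x u i) • Measure.dirac (![x, -u, 0] i)

variable {x u : ℝ}

lemma threePointWeight_nonneg (hx : 0 < x) (hu : 0 < u) (hxu : 1 ≤ x * u) (i : Fin 3) :
    0 ≤ threePointWeight x u i := by
  fin_cases i
  · change 0 ≤ 1 / (x * (x + u))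
    positivity
  · change 0 ≤ 1 / (u * (x + u))
    positivity
  · exact sub_nonneg.2 ((div_le_one (by positivity)).2 hxu)

lemma sum_threePointWeight (hx : 0 < x) (hu : 0 < u) : ∑ i, threePointWeight x u i = 1 := by
  simp only [threePointWeight, Fin.sum_univ_three, Matrix.cons_val]
  field_simp
  ring

lemma isProbabilityMeasure_threePointLaw (hx : 0 < x) (hu : 0 < u) (hxu : 1 ≤ x * u) :
    IsProbabilityMeasure (threePointLaw x u) :=
  HasSum.isProbabilityMeasure_sum_dirac (threePointWeight_nonneg hx hu hxu)
    (sum_threePointWeight hx hu ▸ hasSum_fintype _)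

lemma integral_threePointLaw (hx : 0 < x) (hu : 0 < u) (hxu : 1 ≤ x * u) (f : ℝ → ℝ) :
    ∫ z, f z ∂threePointLaw x u =
      1 / (x * (x + u)) * f x + 1 / (u * (x + u)) * f (-u) + (1 - 1 / (x * u)) * f 0 := by
  rw [threePointLaw, integral_sum_dirac fun _ ↦ ENNReal.ofReal_ne_top, tsum_fintype]
  simp only [ENNReal.toReal_ofReal (threePointWeight_nonneg hx hu hxu _)]
  simp only [smul_eq_mul, Fin.sum_univ_three, threePointWeight, Matrix.cons_val]

lemma integral_pow_succ_threePointLaw (hx : 0 < x) (hu : 0 < u) (hxu : 1 ≤ x * u) (n : ℕ) :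
    ∫ z, z ^ (n + 1) ∂threePointLaw x u = (x ^ n - (-u) ^ n) / (x + u) := by
  rw [integral_threePointLaw hx hu hxu]
  field_simp
  ring

lemma ae_abs_le_threePointLaw (hx : 0 < x) (hu : 0 < u) :
    ∀ᵐ z ∂threePointLaw x u, |z| ≤ max x u := by
  rw [threePointLaw, Measure.ae_sum_iff]
  intro i
  refine Measure.ae_smul_measure ?_ _
  rw [ae_dirac_eq]
  fin_cases i <;> simp [abs_of_pos, hx, hu, hx.le]

lemma exists_pos_sub_eq_mul_eq (a : ℝ) {v : ℝ} (hv : 0 < v) :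
    ∃ x u : ℝ, 0 < x ∧ 0 < u ∧ x - u = a ∧ x * u = v := by
  have hsq : √(a ^ 2 + 4 * v) ^ 2 = a ^ 2 + 4 * v := sq_sqrt (by positivity)
  obtain ⟨hneg, hpos⟩ := abs_lt.1 (abs_lt_of_sq_lt_sq (by linarith) (sqrt_nonneg (a ^ 2 + 4 * v)))
  exact ⟨(√(a ^ 2 + 4 * v) + a) / 2, (√(a ^ 2 + 4 * v) - a) / 2, by linarith, by linarith,
    by ring, by linarith⟩

lemma exists_bounded_law_with_moments {a b : ℝ} (hab : a ^ 2 + 1 ≤ b) :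
    ∃ ν : Measure ℝ, IsProbabilityMeasure ν ∧ (∃ B, ∀ᵐ z ∂ν, |z| ≤ B) ∧
      ∫ z, z ∂ν = 0 ∧ ∫ z, z ^ 2 ∂ν = 1 ∧ ∫ z, z ^ 3 ∂ν = a ∧ ∫ z, z ^ 4 ∂ν = b := by
  obtain ⟨x, u, hx, hu, rfl, hmul⟩ := exists_pos_sub_eq_mul_eq a (v := b - a ^ 2) (by linarith)
  have hxu : 1 ≤ x * u := by linarith
  have moment := integral_pow_succ_threePointLaw hx hu hxu
  refine ⟨threePointLaw x u, isProbabilityMeasure_threePointLaw hx hu hxu,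
    ⟨_, ae_abs_le_threePointLaw hx hu⟩, by simpa using moment 0, ?_, ?_, ?_⟩
  · rw [moment 1]
    field_simp
    ring
  · rw [moment 2]
    field_simp
    ring
  · obtain rfl : b = (x - u) ^ 2 + x * u := by linarith
    rw [moment 3]
    field_simp
    ring

end ThreePointLaw

lemma measure_lt_abs_le_of_ae_abs_le {Ω : Type*} {mΩ : MeasurableSpace Ω} {P : Measure Ω}
    [IsProbabilityMeasure P] {X : Ω → ℝ} {B : ℝ} (hX : ∀ᵐ ω ∂P, |X ω| ≤ B) {α : ℝ} (hα : 0 ≤ α)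
    {x : ℝ} (hx : 0 ≤ x) :
    P {ω | x < |X ω|} ≤ ENNReal.ofReal (exp (B ^ α) * exp (-x ^ α)) := by
  rcases le_total B x with hBx | hxB
  · have null : P {ω | x < |X ω|} = 0 :=
      measure_mono_null (fun ω (hω : x < |X ω|) ↦ not_le.2 (hBx.trans_lt hω)) hX
    simp [null]
  · refine prob_le_one.trans (ENNReal.one_le_ofReal.2 ?_)
    rw [← exp_add]
    exact one_le_exp (by linarith [rpow_le_rpow hx hxB hα])

lemma abs_fourth_moment_sub_le {m₃ m₄ γ : ℝ} (h : 0 ≤ m₄ - m₃ ^ 2 - 1) (hγ₀ : 0 ≤ γ)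
    (hγ₁ : γ < 1) :
    |√(1 - γ) ^ 4 * ((m₃ / √(1 - γ) ^ 3) ^ 2 + (m₄ - m₃ ^ 2)) + 6 * √(1 - γ) ^ 2 * √γ ^ 2
      + 3 * √γ ^ 4 - m₄| ≤ 2 * (m₄ + 1) * (γ / (1 - γ)) := by
  have hpos : 0 < 1 - γ := by linarith
  have hα : √(1 - γ) ^ 2 = 1 - γ := sq_sqrt hpos.le
  have hβ : √γ ^ 2 = γ := sq_sqrt hγ₀
  have error_eq : √(1 - γ) ^ 4 * ((m₃ / √(1 - γ) ^ 3) ^ 2 + (m₄ - m₃ ^ 2))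
      + 6 * √(1 - γ) ^ 2 * √γ ^ 2 + 3 * √γ ^ 4 - m₄ =
      γ / (1 - γ) * (m₃ ^ 2 + (1 - γ) * (2 - γ) * (3 - (m₄ - m₃ ^ 2))) := by
    rw [div_pow, show √(1 - γ) ^ 4 = (√(1 - γ) ^ 2) ^ 2 by ring,
      show (√(1 - γ) ^ 3) ^ 2 = (√(1 - γ) ^ 2) ^ 3 by ring,
      show √γ ^ 4 = (√γ ^ 2) ^ 2 by ring, hα, hβ]
    field_simp
    ring
  have factor_nonneg : 0 ≤ (1 - γ) * (2 - γ) := by nlinarith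
  have factor_le : (1 - γ) * (2 - γ) ≤ 2 := by nlinarith
  have abs_le_add_one : |3 - (m₄ - m₃ ^ 2)| ≤ m₄ - m₃ ^ 2 + 1 :=
    abs_le.2 (by constructor <;> linarith)
  rw [error_eq, abs_mul, abs_of_nonneg (by positivity : 0 ≤ γ / (1 - γ)), mul_comm]
  gcongr
  calc |m₃ ^ 2 + (1 - γ) * (2 - γ) * (3 - (m₄ - m₃ ^ 2))|
      ≤ |m₃ ^ 2| + |(1 - γ) * (2 - γ) * (3 - (m₄ - m₃ ^ 2))| := abs_add_le _ _
    _ = m₃ ^ 2 + (1 - γ) * (2 - γ) * |3 - (m₄ - m₃ ^ 2)| := by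
        rw [abs_mul, abs_of_nonneg factor_nonneg, abs_sq]
    _ ≤ m₃ ^ 2 + 2 * (m₄ - m₃ ^ 2 + 1) := by gcongr
    _ ≤ 2 * (m₄ + 1) := by linarith [sq_nonneg m₃]

lemma exists_indepFun_gaussian_with_moments {m₃ m₄ γ : ℝ} (h : 0 ≤ m₄ - m₃ ^ 2 - 1)
    (hγ : γ ∈ Set.Ico 0 1) :
    ∃ (Ω : Type) (_ : MeasurableSpace Ω) (P : Measure Ω) (_ : IsProbabilityMeasure P)
      (X Y : Ω → ℝ),
      Measurable X ∧ Measurable Y ∧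
      IndepFun X Y P ∧
      Measure.map Y P = gaussianReal 0 1 ∧
      (∃ B : ℝ, ∀ᵐ ω ∂P, |X ω| ≤ B) ∧
      (∫ ω, (√(1 - γ) * X ω + √γ * Y ω) ∂P) = 0 ∧
      (∫ ω, (√(1 - γ) * X ω + √γ * Y ω) ^ 2 ∂P) = 1 ∧
      (∫ ω, (√(1 - γ) * X ω + √γ * Y ω) ^ 3 ∂P) = m₃ ∧
      |(∫ ω, (√(1 - γ) * X ω + √γ * Y ω) ^ 4 ∂P) - m₄| ≤ 2 * (m₄ + 1) * (γ / (1 - γ)) := by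
  obtain ⟨hγ₀, hγ₁⟩ := hγ
  have hα : 0 < √(1 - γ) := sqrt_pos.2 (by linarith)
  obtain ⟨ν, _, ⟨B, hB⟩, hν₁, hν₂, hν₃, hν₄⟩ := exists_bounded_law_with_moments
    (a := m₃ / √(1 - γ) ^ 3) (b := (m₃ / √(1 - γ) ^ 3) ^ 2 + (m₄ - m₃ ^ 2)) (by linarith)
  let P := ν.prod (gaussianReal 0 1)
  have lawX : HasLaw Prod.fst ν P := measurePreserving_fst.hasLaw
  have lawY : HasLaw Prod.snd (gaussianReal 0 1) P := measurePreserving_snd.hasLaw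
  have indep : Prod.fst ⟂ᵢ[P] Prod.snd := indepFun_prod measurable_id measurable_id
  have bounded : ∀ᵐ ω ∂P, |ω.1| ≤ B := (lawX.ae_iff (by fun_prop)).2 hB
  have memLp (p) : MemLp Prod.fst p P :=
    memLp_of_bounded (bounded.mono fun _ ↦ abs_le.1) (by fun_prop) p
  have mean_zero : ∫ ω, ω.1 ∂P = 0 := lawX.integral_eq.trans hν₁
  refine ⟨ℝ × ℝ, inferInstance, P, inferInstance, Prod.fst, Prod.snd, measurable_fst,
    measurable_snd, indep, lawY.map_eq, ⟨B, bounded⟩,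
    integral_mul_add_mul_gaussian indep lawY (memLp 1) mean_zero _ _, ?_, ?_, ?_⟩
  · rw [integral_mul_add_mul_gaussian_sq indep lawY (memLp 2) mean_zero,
      integral_pow_of_hasLaw lawX, hν₂, sq_sqrt (by linarith), sq_sqrt hγ₀]
    ring
  · rw [integral_mul_add_mul_gaussian_pow_three indep lawY (memLp 3) mean_zero,
      integral_pow_of_hasLaw lawX, hν₃]
    exact mul_div_cancel₀ m₃ (pow_ne_zero 3 hα.ne')
  · rw [integral_mul_add_mul_gaussian_pow_four indep lawY (memLp 4) mean_zero,
      integral_pow_of_hasLaw lawX, integral_pow_of_hasLaw lawX, hν₂, hν₄, mul_one]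
    exact abs_fourth_moment_sub_le h hγ₀ hγ₁

/-- (Moment matching with a small Gaussian component.)  For every
`C₁ > 0` there are `γ₀, C > 0` such that: for all `m₃, m₄ ∈ ℝ` with `m₄ − m₃² − 1 ≥ 0` and
`m₄ ≤ C₁`, and every `γ ∈ (0, γ₀)`, there is a probability space carrying independent real
random variables `ζ_γ` (with subexponential tails) and `ζ_G` (standard Gaussian) such that
`ζ′ := √(1−γ) ζ_γ + √γ ζ_G` satisfies `E ζ′ = 0`, `E ζ′² = 1`, `E ζ′³ = m₃` and
`|E ζ′⁴ − m₄| ≤ C γ`. -/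
theorem stmt_17 (C₁ : ℝ) (hC₁ : 0 < C₁) :
    ∃ γ₀ C : ℝ, 0 < γ₀ ∧ 0 < C ∧
      ∀ m₃ m₄ : ℝ, 0 ≤ m₄ - m₃ ^ 2 - 1 → m₄ ≤ C₁ →
      ∀ γ : ℝ, γ ∈ Set.Ioo 0 γ₀ →
      ∃ (Ω : Type) (_ : MeasurableSpace Ω) (P : Measure Ω) (_ : IsProbabilityMeasure P)
        (X Y : Ω → ℝ),
        Measurable X ∧ Measurable Y ∧
        IndepFun X Y P ∧
        Measure.map Y P = gaussianReal 0 1 ∧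
        (∃ C₂ : ℝ, 0 < C₂ ∧ ∃ θ : ℝ, 1 < θ ∧
          ∀ x : ℝ, 0 < x →
            P {ω | x < |X ω|} ≤ ENNReal.ofReal (C₂ * Real.exp (-(x ^ (1 / θ))))) ∧
        (∫ ω, (Real.sqrt (1 - γ) * X ω + Real.sqrt γ * Y ω) ∂P) = 0 ∧
        (∫ ω, (Real.sqrt (1 - γ) * X ω + Real.sqrt γ * Y ω) ^ 2 ∂P) = 1 ∧
        (∫ ω, (Real.sqrt (1 - γ) * X ω + Real.sqrt γ * Y ω) ^ 3 ∂P) = m₃ ∧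
        |(∫ ω, (Real.sqrt (1 - γ) * X ω + Real.sqrt γ * Y ω) ^ 4 ∂P) - m₄| ≤ C * γ := by
  refine ⟨1 / 2, 4 * (C₁ + 1), by norm_num, by positivity, fun m₃ m₄ h hC γ ⟨hγ₀, hγ⟩ ↦ ?_⟩
  obtain ⟨Ω, _, P, _, X, Y, hX, hY, hXY, hgauss, ⟨B, hB⟩, h₁, h₂, h₃, h₄⟩ :=
    exists_indepFun_gaussian_with_moments h ⟨hγ₀.le, by linarith⟩
  have ratio_le : γ / (1 - γ) ≤ 2 * γ := by
    rw [div_le_iff₀ (by linarith)]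
    nlinarith
  have ratio_nonneg : 0 ≤ γ / (1 - γ) := div_nonneg hγ₀.le (by linarith)
  refine ⟨Ω, _, P, ‹_›, X, Y, hX, hY, hXY, hgauss,
    ⟨exp (B ^ (1 / 2 : ℝ)), exp_pos _, 2, one_lt_two, fun x hx ↦
      measure_lt_abs_le_of_ae_abs_le hB (by norm_num) hx.le⟩, h₁, h₂, h₃, ?_⟩
  calc _ ≤ 2 * (m₄ + 1) * (γ / (1 - γ)) := h₄
    _ ≤ 2 * (C₁ + 1) * (2 * γ) := by gcongr
    _ = 4 * (C₁ + 1) * γ := by ring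
end
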